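/- Let a ∈ {0,1}^{n×n} be the symmetric, zero-diagonal adjacency matrix of a simple undirected graph, and let g: ℝ → ℝ be even, 2π-periodic, with values in [−1, 1], satisfying g(π) = −1 and 1 − g(x) ≤ 2x/π for all x ∈ [0, π]. Define L(θ; a, g) = ∑_{1≤i<j≤n} a_{ij} g(θ_i − θ_j). Then: (i) for every θ ∈ ℝ^n, L(θ; a, g) ≥ |E| − 2·W_mc; and (ii) if σ ∈ {−1,+1}^n attains the max cut and θ* is its binarized configuration (θ*_i = 0 if σ_i = +1, θ*_i = π if σ_i = −1), then L(θ*; a, g) = |E| − 2·W_mc. Hence the global minimum of L(·; a, g) equals |E| − 2·W_mc and is attained at θ*. -/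

import Mathlib

open Real Finset

/-!
Rotate the circle by a uniformly random angle `t` and give each vertex the sign of the half circle
that contains `θ i + t`. An edge `ij` is cut with probability `d / π`, where
`d = arccos (cos (θ i - θ j))` is the arc distance between its two phases, and the hypothesis on
`g` says exactly that `1 - g (θ i - θ j) ≤ 2 d / π`. Hence `|E| - L θ` is at most twice the expected
cut, which is at most twice the maximum cut. Equality holds at `θ*`, where each `1 - g (θ i - θ j)`
is `2` across the cut and `0` elsewhere.
-/

theorem intervalIntegrable_finsetSum {κ E : Type*} [TopologicalSpace E] [ENormedAddCommMonoid E]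
    [ContinuousAdd E] {μ : MeasureTheory.Measure ℝ} {a b : ℝ} {s : Finset κ} {f : κ → ℝ → E}
    (hf : ∀ i ∈ s, IntervalIntegrable (f i) μ a b) :
    IntervalIntegrable (fun t => ∑ i ∈ s, f i t) μ a b := by
  simpa only [sum_fn] using IntervalIntegrable.sum s hf

theorem apply_arccos_cos {β : Type*} {f : ℝ → β} (heven : f.Even) (hper : f.Periodic (2 * π))
    (x : ℝ) : f (arccos (cos x)) = f x := by
  have hcos : cos x = cos (arccos (cos x)) :=
    (cos_arccos (neg_one_le_cos x) (cos_le_one x)).symm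
  obtain ⟨k, hk | hk⟩ := cos_eq_cos_iff.mp hcos
  · rw [hk, show 2 * k * π + x = x + k * (2 * π) by ring, hper.int_mul k x]
  · rw [hk, show 2 * k * π - x = -x + k * (2 * π) by ring, hper.int_mul k (-x), heven x]

theorem one_sub_le_arccos_cos {g : ℝ → ℝ} (heven : g.Even) (hper : g.Periodic (2 * π))
    (hratio : ∀ x ∈ Set.Icc 0 π, 1 - g x ≤ 2 * x / π) (x : ℝ) :
    1 - g x ≤ 2 * arccos (cos x) / π := by
  rw [← apply_arccos_cos heven hper x]
  exact hratio _ ⟨arccos_nonneg _, arccos_le_pi _⟩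

/-- The `±1`-valued square wave of period `2π`, equal to `1` on `[0, π)`. It rounds a phase to a
spin. Defining it by the parity of a floor, rather than as the sign of the sine, leaves no zeros, so
antiperiodicity holds everywhere. -/
noncomputable def squareWave (x : ℝ) : ℝ :=
  (-1) ^ ⌊x / π⌋

theorem squareWave_eq_one_or_eq_neg_one (x : ℝ) : squareWave x = 1 ∨ squareWave x = -1 := by
  rw [squareWave, neg_one_zpow_eq_ite]
  split_ifs <;> simp

theorem squareWave_antiperiodic : Function.Antiperiodic squareWave π := fun x => by
  rw [squareWave, squareWave, add_div, div_self pi_ne_zero, Int.floor_add_one,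
    zpow_add_one₀ (by norm_num), mul_neg_one]

@[fun_prop]
theorem measurable_squareWave : Measurable squareWave :=
  (measurable_from_top (f := fun k : ℤ => (-1 : ℝ) ^ k)).comp
    (Int.measurable_floor.comp (measurable_id.div_const π))

theorem squareWave_eq_one {x : ℝ} (h₀ : 0 ≤ x) (h₁ : x < π) : squareWave x = 1 := by
  have hfloor : ⌊x / π⌋ = 0 :=
    Int.floor_eq_zero_iff.mpr ⟨div_nonneg h₀ pi_pos.le, (div_lt_one pi_pos).mpr h₁⟩
  rw [squareWave, hfloor, zpow_zero]

theorem squareWave_eq_neg_one {x : ℝ} (h₀ : π ≤ x) (h₁ : x < 2 * π) : squareWave x = -1 := by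
  rw [← sub_add_cancel x π, squareWave_antiperiodic,
    squareWave_eq_one (sub_nonneg.mpr h₀) (by linarith)]

/-- The indicator that the rotation by `t` makes the square wave separate the phases `x` and `y`. -/
noncomputable def separation (x y t : ℝ) : ℝ :=
  if squareWave (x + t) ≠ squareWave (y + t) then 1 else 0

theorem separation_comm (x y : ℝ) : separation x y = separation y x := by
  funext t
  simp only [separation, ne_comm]

theorem separation_add_add (x y s t : ℝ) :
    separation (x + s) (y + s) t = separation x y (s + t) := by
  simp only [separation, add_assoc]

theorem separation_periodic (x y : ℝ) : Function.Periodic (separation x y) π := fun t => by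
  simp only [separation, ← add_assoc, squareWave_antiperiodic _, ne_eq, neg_inj]

theorem intervalIntegrable_separation (x y a b : ℝ) :
    IntervalIntegrable (separation x y) MeasureTheory.volume a b := by
  have hmeas : Measurable (separation x y) :=
    Measurable.ite (measurableSet_eq_fun (by fun_prop) (by fun_prop)).compl
      measurable_const measurable_const
  refine (intervalIntegrable_const (c := (1 : ℝ))).mono_fun hmeas.aestronglyMeasurable
    (.of_forall fun t => ?_)
  dsimp only [separation]
  split_ifs <;> simp

theorem integral_separation_add_add (x y s : ℝ) :
    ∫ t in 0..π, separation (x + s) (y + s) t = ∫ t in 0..π, separation x y t := by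
  simp only [separation_add_add, intervalIntegral.integral_comp_add_left, add_zero]
  simpa using (separation_periodic x y).intervalIntegral_add_eq s 0

theorem integral_separation_zero_of_mem_Icc {x : ℝ} (hx : x ∈ Set.Icc 0 π) :
    ∫ t in 0..π, separation x 0 t = x := by
  have hleft : ∫ t in 0..(π - x), separation x 0 t = ∫ _t in 0..(π - x), (0 : ℝ) := by
    refine intervalIntegral.integral_congr_Ioo_of_le (by linarith [hx.2]) fun t ht => ?_
    have hxt : squareWave (x + t) = 1 :=
      squareWave_eq_one (by linarith [hx.1, ht.1]) (by linarith [ht.2])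
    have ht' : squareWave (0 + t) = 1 :=
      squareWave_eq_one (by linarith [ht.1]) (by linarith [hx.1, ht.2])
    rw [separation, hxt, ht', if_neg (by simp)]
  have hright : ∫ t in (π - x)..π, separation x 0 t = ∫ _t in (π - x)..π, (1 : ℝ) := by
    refine intervalIntegral.integral_congr_Ioo_of_le (by linarith [hx.1]) fun t ht => ?_
    have hxt : squareWave (x + t) = -1 :=
      squareWave_eq_neg_one (by linarith [ht.1]) (by linarith [hx.2, ht.2])
    have ht' : squareWave (0 + t) = 1 :=
      squareWave_eq_one (by linarith [hx.2, ht.1]) (by linarith [ht.2])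
    rw [separation, hxt, ht', if_pos (by norm_num)]
  rw [← intervalIntegral.integral_add_adjacent_intervals
    (intervalIntegrable_separation x 0 0 (π - x)) (intervalIntegrable_separation x 0 (π - x) π),
    hleft, hright]
  simp

theorem integral_separation (x y : ℝ) :
    ∫ t in 0..π, separation x y t = arccos (cos (x - y)) := by
  set F : ℝ → ℝ := fun z => ∫ t in 0..π, separation z 0 t with hF
  have heven : F.Even := fun z => by
    simp only [hF]
    rw [separation_comm z 0, ← integral_separation_add_add 0 z (-z), zero_add, add_neg_cancel]
  have hper : F.Periodic (2 * π) := fun z => by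
    simp only [hF, separation, add_right_comm z, squareWave_antiperiodic.periodic_two_mul _]
  calc ∫ t in 0..π, separation x y t
      = F (x - y) := by simpa using integral_separation_add_add (x - y) 0 y
    _ = F (arccos (cos (x - y))) := (apply_arccos_cos heven hper _).symm
    _ = arccos (cos (x - y)) :=
      integral_separation_zero_of_mem_Icc ⟨arccos_nonneg _, arccos_le_pi _⟩

section MaxCut

variable {ι : Type*}

/-- The spin configurations `σ ∈ {-1, 1}^ι`, encoded as real vectors. -/
def IsSpin (σ : ι → ℝ) : Prop :=
  ∀ i, σ i = 1 ∨ σ i = -1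

/-- The binarized configuration `θ*` of a spin configuration: phase `0` for spin `1`, phase `π` for
spin `-1`. -/
noncomputable def binarize (σ : ι → ℝ) (i : ι) : ℝ :=
  if σ i = 1 then 0 else π

theorem isSpin_squareWave (θ : ι → ℝ) (t : ℝ) : IsSpin fun i => squareWave (θ i + t) :=
  fun i => squareWave_eq_one_or_eq_neg_one (θ i + t)

variable [Fintype ι]

/-- The weight of the pairs separated by the labelling `σ`, which is `cut(σ)` for spins. The sum is
over ordered pairs, so an undirected graph is given by weights supported on `i < j`. -/
def cutWeight {α : Type*} [DecidableEq α] (w : ι → ι → ℝ) (σ : ι → α) : ℝ :=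
  ∑ i, ∑ j, if σ i ≠ σ j then w i j else 0

/-- The energy `L(θ; w, g)`, with the sum over ordered pairs as in `cutWeight`. -/
def couplingEnergy (w : ι → ι → ℝ) (g : ℝ → ℝ) (θ : ι → ℝ) : ℝ :=
  ∑ i, ∑ j, w i j * g (θ i - θ j)

theorem cutWeight_ite {α : Type*} [DecidableEq α] (r : ι → ι → Prop) [DecidableRel r]
    (w : ι → ι → ℝ) (σ : ι → α) :
    cutWeight (fun i j => if r i j then w i j else 0) σ =
      ∑ i, ∑ j, if r i j ∧ σ i ≠ σ j then w i j else 0 := by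
  simp only [cutWeight, ← ite_and, and_comm]

theorem couplingEnergy_ite (r : ι → ι → Prop) [DecidableRel r] (w : ι → ι → ℝ) (g : ℝ → ℝ)
    (θ : ι → ℝ) :
    couplingEnergy (fun i j => if r i j then w i j else 0) g θ =
      ∑ i, ∑ j, if r i j then w i j * g (θ i - θ j) else 0 := by
  simp only [couplingEnergy, ite_mul, zero_mul]

theorem cutWeight_squareWave (w : ι → ι → ℝ) (θ : ι → ℝ) (t : ℝ) :
    cutWeight w (fun i => squareWave (θ i + t)) = ∑ i, ∑ j, w i j * separation (θ i) (θ j) t := by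
  simp only [cutWeight, separation, mul_ite, mul_one, mul_zero]

theorem intervalIntegrable_cutWeight_squareWave (w : ι → ι → ℝ) (θ : ι → ℝ) (a b : ℝ) :
    IntervalIntegrable (fun t => cutWeight w fun i => squareWave (θ i + t))
      MeasureTheory.volume a b := by
  simp only [cutWeight_squareWave]
  exact intervalIntegrable_finsetSum fun i _ => intervalIntegrable_finsetSum fun j _ =>
    (intervalIntegrable_separation (θ i) (θ j) a b).const_mul (w i j)

theorem integral_cutWeight_squareWave (w : ι → ι → ℝ) (θ : ι → ℝ) :
    ∫ t in 0..π, cutWeight w (fun i => squareWave (θ i + t)) =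
      ∑ i, ∑ j, w i j * arccos (cos (θ i - θ j)) := by
  have hterm (i j : ι) : IntervalIntegrable (fun t => w i j * separation (θ i) (θ j) t)
      MeasureTheory.volume 0 π := (intervalIntegrable_separation _ _ _ _).const_mul _
  simp only [cutWeight_squareWave]
  rw [intervalIntegral.integral_finsetSum fun i _ =>
    intervalIntegrable_finsetSum fun j _ => hterm i j]
  refine sum_congr rfl fun i _ => ?_
  rw [intervalIntegral.integral_finsetSum fun j _ => hterm i j]
  simp only [intervalIntegral.integral_const_mul, integral_separation]

theorem sum_mul_arccos_cos_le {w : ι → ι → ℝ} {W : ℝ}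
    (hW : ∀ τ : ι → ℝ, IsSpin τ → cutWeight w τ ≤ W) (θ : ι → ℝ) :
    ∑ i, ∑ j, w i j * arccos (cos (θ i - θ j)) ≤ π * W := by
  calc ∑ i, ∑ j, w i j * arccos (cos (θ i - θ j))
      = ∫ t in 0..π, cutWeight w fun i => squareWave (θ i + t) :=
        (integral_cutWeight_squareWave w θ).symm
    _ ≤ ∫ _t in 0..π, W :=
        intervalIntegral.integral_mono_on pi_pos.le
          (intervalIntegrable_cutWeight_squareWave w θ 0 π) intervalIntegrable_const
          fun t _ => hW _ (isSpin_squareWave θ t)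
    _ = π * W := by simp

theorem sum_sub_couplingEnergy (w : ι → ι → ℝ) (g : ℝ → ℝ) (θ : ι → ℝ) :
    ∑ i, ∑ j, w i j - couplingEnergy w g θ = ∑ i, ∑ j, w i j * (1 - g (θ i - θ j)) := by
  simp only [couplingEnergy, mul_sub, mul_one, sum_sub_distrib]

variable {w : ι → ι → ℝ} {g : ℝ → ℝ} {σ : ι → ℝ}

theorem sum_sub_two_mul_le_couplingEnergy (hw : ∀ i j, 0 ≤ w i j) (heven : g.Even)
    (hper : g.Periodic (2 * π)) (hratio : ∀ x ∈ Set.Icc 0 π, 1 - g x ≤ 2 * x / π)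
    {W : ℝ} (hW : ∀ τ : ι → ℝ, IsSpin τ → cutWeight w τ ≤ W) (θ : ι → ℝ) :
    ∑ i, ∑ j, w i j - 2 * W ≤ couplingEnergy w g θ := by
  suffices ∑ i, ∑ j, w i j - couplingEnergy w g θ ≤ 2 * W by linarith
  calc ∑ i, ∑ j, w i j - couplingEnergy w g θ
      = ∑ i, ∑ j, w i j * (1 - g (θ i - θ j)) := sum_sub_couplingEnergy w g θ
    _ ≤ ∑ i, ∑ j, w i j * (2 * arccos (cos (θ i - θ j)) / π) := by
        gcongr with i _ j _
        · exact hw i j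
        · exact one_sub_le_arccos_cos heven hper hratio _
    _ = 2 / π * ∑ i, ∑ j, w i j * arccos (cos (θ i - θ j)) := by
        simp only [mul_sum]
        congr! 2
        ring
    _ ≤ 2 / π * (π * W) := by
        gcongr
        exact sum_mul_arccos_cos_le hW θ
    _ = 2 * W := by field_simp

theorem couplingEnergy_binarize (heven : g.Even) (hg0 : g 0 = 1) (hgpi : g π = -1)
    (hσ : IsSpin σ) :
    couplingEnergy w g (binarize σ) = ∑ i, ∑ j, w i j - 2 * cutWeight w σ := by
  have hpair (i j : ι) : 1 - g (binarize σ i - binarize σ j) = if σ i ≠ σ j then 2 else 0 := by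
    rcases hσ i with hi | hi <;> rcases hσ j with hj | hj <;>
      norm_num [binarize, hi, hj, hg0, hgpi, heven π]
  have hcut : ∑ i, ∑ j, w i j - couplingEnergy w g (binarize σ) = 2 * cutWeight w σ := by
    simp only [sum_sub_couplingEnergy, hpair, cutWeight, mul_sum, mul_ite, mul_zero,
      mul_comm _ (2 : ℝ)]
  linarith

theorem generalized_coupling_global_min_is_maxcut_energy_general
    (hw : ∀ i j, 0 ≤ w i j) (heven : g.Even) (hper : g.Periodic (2 * π))
    (hg0 : g 0 ≤ 1) (hgpi : g π = -1) (hratio : ∀ x ∈ Set.Icc 0 π, 1 - g x ≤ 2 * x / π)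
    (hσ : IsSpin σ) (hmax : ∀ τ : ι → ℝ, IsSpin τ → cutWeight w τ ≤ cutWeight w σ) :
    (∀ θ, ∑ i, ∑ j, w i j - 2 * cutWeight w σ ≤ couplingEnergy w g θ)
    ∧ couplingEnergy w g (binarize σ) = ∑ i, ∑ j, w i j - 2 * cutWeight w σ
    ∧ IsLeast {v | ∃ θ, v = couplingEnergy w g θ} (∑ i, ∑ j, w i j - 2 * cutWeight w σ) := by
  have hzero : g 0 = 1 := by
    have hge : 1 - g 0 ≤ 2 * 0 / π := hratio 0 ⟨le_rfl, pi_pos.le⟩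
    rw [mul_zero, zero_div] at hge
    linarith
  have hlower := sum_sub_two_mul_le_couplingEnergy hw heven hper hratio hmax
  have hattained := couplingEnergy_binarize (w := w) heven hzero hgpi hσ
  refine ⟨hlower, hattained, ⟨binarize σ, hattained.symm⟩, ?_⟩
  rintro _ ⟨θ, rfl⟩
  exact hlower θ

end MaxCut

/-- For an even, `2π`-periodic coupling `g` with values in `[-1,1]`,
`g(π) = -1`, and `1 - g(x) ≤ 2x/π` on `[0, π]`: (i) every configuration `θ` satisfies
`L(θ; a, g) ≥ |E| - 2 W_mc`; (ii) the binarized configuration `θ*` of a max-cut spin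
configuration `σ` satisfies `L(θ*; a, g) = |E| - 2 W_mc`; hence the global minimum of
`L(·; a, g)` equals `|E| - 2 W_mc` and is attained at `θ*`. -/
theorem generalized_coupling_global_min_is_maxcut_energy
    (n : ℕ) (a : Fin n → Fin n → ℝ)
    (hsym : ∀ i j, a i j = a j i) (hdiag : ∀ i, a i i = 0)
    (h01 : ∀ i j, a i j = 0 ∨ a i j = 1)
    (g : ℝ → ℝ)
    (heven : ∀ x, g (-x) = g x)
    (hper : ∀ x, g (x + 2 * Real.pi) = g x)
    (hbd : ∀ x, g x ∈ Set.Icc (-1 : ℝ) 1)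
    (hgpi : g Real.pi = -1)
    (hratio : ∀ x ∈ Set.Icc (0 : ℝ) Real.pi, 1 - g x ≤ 2 * x / Real.pi)
    (L : (Fin n → ℝ) → ℝ)
    (hL : ∀ θ : Fin n → ℝ,
      L θ = ∑ i : Fin n, ∑ j : Fin n, if i < j then a i j * g (θ i - θ j) else 0)
    (Wmc : ℝ)
    (hW : IsGreatest {w : ℝ | ∃ τ : Fin n → ℝ, (∀ i, τ i = 1 ∨ τ i = -1) ∧
        w = ∑ i : Fin n, ∑ j : Fin n, if i < j ∧ τ i ≠ τ j then a i j else 0} Wmc)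
    (σ : Fin n → ℝ) (hσ : ∀ i, σ i = 1 ∨ σ i = -1)
    (hσmax : (∑ i : Fin n, ∑ j : Fin n, if i < j ∧ σ i ≠ σ j then a i j else 0) = Wmc)
    (θstar : Fin n → ℝ)
    (hθstar : ∀ i, θstar i = if σ i = 1 then 0 else Real.pi) :
    (∀ θ : Fin n → ℝ,
        (∑ i : Fin n, ∑ j : Fin n, if i < j then a i j else 0) - 2 * Wmc ≤ L θ)
    ∧ L θstar = (∑ i : Fin n, ∑ j : Fin n, if i < j then a i j else 0) - 2 * Wmc
    ∧ IsLeast {v : ℝ | ∃ θ : Fin n → ℝ, v = L θ}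
        ((∑ i : Fin n, ∑ j : Fin n, if i < j then a i j else 0) - 2 * Wmc) := by
  have hw (i j : Fin n) : 0 ≤ if i < j then a i j else 0 := by
    rcases h01 i j with h | h <;> rw [h] <;> split_ifs <;> norm_num
  obtain rfl : L = couplingEnergy (fun i j => if i < j then a i j else 0) g :=
    funext fun θ => (hL θ).trans (couplingEnergy_ite (· < ·) a g θ).symm
  obtain rfl : θstar = binarize σ := funext hθstar
  have hcut := cutWeight_ite (α := ℝ) (· < ·) a
  rw [← hσmax, ← hcut σ]
  refine generalized_coupling_global_min_is_maxcut_energy_general hw heven hper (hbd 0).2 hgpi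
    hratio hσ fun τ hτ => ?_
  rw [hcut τ, hcut σ, hσmax]
  exact hW.2 ⟨τ, hτ, rfl⟩
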